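/- Let Π = (Δ, Σ, 𝒱, ℰ) be an LCL problem for Δ-regular unrooted trees, let 𝒮 ⊆ 𝒱, and let 𝒟* ∈ flexible-SCC(𝒟_𝒮). Then there exists an integer K such that for every integer d ≥ K, all node configurations C ∈ 𝒮↾_{𝒟*} and C′ ∈ 𝒮↾_{𝒟*}, and all size-2 sub-multisets {α, β} of C and {α′, β′} of C′, there exists a sequence α_1, C_1, β_1, α_2, C_2, β_2, …, α_{d+1}, C_{d+1}, β_{d+1} satisfying: α_1 = α, β_1 = β, C_1 = C; α_{d+1} = α′, β_{d+1} = β′, C_{d+1} = C′; for every 1 ≤ i ≤ d+1 the multiset {α_i, β_i} is a size-2 sub-multiset of C_i and C_i ∈ 𝒮; and for every 1 ≤ i ≤ d the multiset {β_i, α_{i+1}} lies in ℰ. -/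

import Mathlib

/-- `hasWalk E k u v`: there is a walk of length exactly `k` from `u` to `v` in the
directed graph with edge relation `E`. -/
def hasWalk {α : Type*} (E : α → α → Prop) : ℕ → α → α → Prop
  | 0, u, v => u = v
  | k + 1, u, v => ∃ w, E u w ∧ hasWalk E k w v

/-- Vertex set of the automaton `M_𝒟`: ordered pairs whose underlying size-2 multiset
lies in `𝒟`. -/
def mVert {L : Type} [DecidableEq L] (D : Set (Multiset L)) : Set (L × L) :=
  {p | ({p.1, p.2} : Multiset L) ∈ D}

/-- Edge relation of the automaton `M_𝒟` (w.r.t. the edge constraint `ℰ`):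
`(a,b) → (c,d)` whenever both are vertices and `{b,c} ∈ ℰ`. -/
def mEdge {L : Type} [DecidableEq L] (D E : Set (Multiset L)) (p q : L × L) : Prop :=
  p ∈ mVert D ∧ q ∈ mVert D ∧ ({p.2, q.1} : Multiset L) ∈ E

/-- The vertex `(a,b)` of `M_𝒟` (equivalently the multiset `{a,b} ∈ 𝒟`) is
path-flexible. -/
def flexPair {L : Type} [DecidableEq L] (D E : Set (Multiset L)) (a b : L) : Prop :=
  ∃ K : ℕ, ∀ k : ℕ, K ≤ k →
    hasWalk (mEdge D E) k (a, b) (a, b) ∧ hasWalk (mEdge D E) k (a, b) (b, a) ∧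
    hasWalk (mEdge D E) k (b, a) (a, b) ∧ hasWalk (mEdge D E) k (b, a) (b, a)

/-- The relation `∼` on `𝒟`: `{a,b} ∼ {c,d}` iff there is a walk (of length `≥ 0`)
from `s` to `t` in `M_𝒟` for every `s ∈ {(a,b),(b,a)}` and `t ∈ {(c,d),(d,c)}`. -/
def simPair {L : Type} [DecidableEq L] (D E : Set (Multiset L)) (a b c d : L) : Prop :=
  ∀ s ∈ ({(a, b), (b, a)} : Set (L × L)), ∀ t ∈ ({(c, d), (d, c)} : Set (L × L)),
    ∃ k : ℕ, hasWalk (mEdge D E) k s t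

/-- `𝒟_𝒮`: the set of size-2 multisets that are sub-multisets of some `C ∈ 𝒮`. -/
def dOfS {L : Type} [DecidableEq L] (S : Set (Multiset L)) : Set (Multiset L) :=
  {D | Multiset.card D = 2 ∧ ∃ C ∈ S, D ≤ C}

/-- `𝒮↾_𝒟`: configurations of `𝒮` all of whose size-2 sub-multisets lie in `𝒟`. -/
def cfgRestrict {L : Type} [DecidableEq L] (S D : Set (Multiset L)) : Set (Multiset L) :=
  {C | C ∈ S ∧ ∀ D' : Multiset L, Multiset.card D' = 2 → D' ≤ C → D' ∈ D}

/-- `∼` transported to size-2 multisets. -/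
def simMul {L : Type} [DecidableEq L] (D E : Set (Multiset L)) (D₁ D₂ : Multiset L) : Prop :=
  ∃ a b c d : L, D₁ = ({a, b} : Multiset L) ∧ D₂ = ({c, d} : Multiset L) ∧ simPair D E a b c d

/-- Path-flexibility transported to size-2 multisets. -/
def flexMul {L : Type} [DecidableEq L] (D E : Set (Multiset L)) (D₁ : Multiset L) : Prop :=
  ∃ a b : L, D₁ = ({a, b} : Multiset L) ∧ flexPair D E a b

/-- `flexible-SCC(𝒟)`: the set of strongly connected components of `𝒟`
(equivalence classes of `∼` on `𝒟^∼`) all of whose elements are path-flexible. -/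
def flexSCC {L : Type} [DecidableEq L] (D E : Set (Multiset L)) : Set (Set (Multiset L)) :=
  {D' | (∃ D₀ ∈ D, simMul D E D₀ D₀ ∧
          D' = {D₁ | D₁ ∈ D ∧ simMul D E D₁ D₁ ∧ simMul D E D₁ D₀}) ∧
        ∀ D₁ ∈ D', flexMul D E D₁}

/-!
Reading a walk in `M_𝒟` backwards and swapping each vertex `(a, b)` to `(b, a)` gives a walk
again, so `∼` is symmetric and transitive, and any two vertices `p`, `q` over a strongly connected
component are joined by a walk, of some length `m`. If `p` is path-flexible, closed walks at `p`
of every large length `k` extend this to walks from `p` to `q` of every large length `k + m`. Over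
finitely many pairs `p`, `q` one threshold serves them all. Every vertex of `M_{𝒟_𝒮}` lies in some
configuration of `𝒮`, which turns a walk of positive length into the required sequence, with the
configurations at its two ends prescribed.
-/

open Filter

theorem hasWalk.trans {α : Type*} {R : α → α → Prop} {m n : ℕ} {u v w : α}
    (huv : hasWalk R m u v) (hvw : hasWalk R n v w) : hasWalk R (m + n) u w := by
  induction m generalizing u with
  | zero =>
    obtain rfl : u = v := huv
    rwa [Nat.zero_add]
  | succ m ih =>
    obtain ⟨x, hux, hxv⟩ := huv
    rw [Nat.add_right_comm]
    exact ⟨x, hux, ih hxv⟩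

theorem hasWalk_one {α : Type*} {R : α → α → Prop} {u v : α} : hasWalk R 1 u v ↔ R u v := by
  simp [hasWalk]

theorem hasWalk.map_reverse {α β : Type*} {R : α → α → Prop} {Q : β → β → Prop} {φ : α → β}
    (hφ : ∀ u v, R u v → Q (φ v) (φ u)) {k : ℕ} {u v : α} (h : hasWalk R k u v) :
    hasWalk Q k (φ v) (φ u) := by
  induction k generalizing u with
  | zero => exact congrArg φ (Eq.symm h)
  | succ k ih =>
    obtain ⟨x, hux, hxv⟩ := h
    exact (ih hxv).trans (hasWalk_one.2 (hφ u x hux))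

theorem hasWalk.exists_seq {α : Type*} {R : α → α → Prop} {k : ℕ} {u v : α}
    (h : hasWalk R k u v) : ∃ f : ℕ → α, f 0 = u ∧ f k = v ∧ ∀ i < k, R (f i) (f (i + 1)) := by
  induction k generalizing u with
  | zero => exact ⟨fun _ => u, rfl, h, fun _ hi => absurd hi (Nat.not_lt_zero _)⟩
  | succ k ih =>
    obtain ⟨x, hux, hxv⟩ := h
    obtain ⟨f, rfl, hfk, hf⟩ := ih hxv
    refine ⟨fun i => Nat.casesOn i u f, rfl, hfk, ?_⟩
    rintro (_ | i) hi
    · exact hux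
    · exact hf i (Nat.lt_of_succ_lt_succ hi)

theorem hasWalk.eventually_of_eventually_closed {α : Type*} {R : α → α → Prop} {m : ℕ} {u v : α}
    (huv : hasWalk R m u v) (huu : ∀ᶠ k in atTop, hasWalk R k u u) :
    ∀ᶠ k in atTop, hasWalk R k u v := by
  rw [← map_add_atTop_eq_nat m, eventually_map]
  exact huu.mono fun k hk => hk.trans huv

theorem exists_seq_of_endpoints {β : Type*} {P : ℕ → β → Prop} {d : ℕ} (hd : d ≠ 0) {x y : β}
    (hx : P 0 x) (hy : P d y) (h : ∀ i < d, ∃ z, P i z) :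
    ∃ g : ℕ → β, g 0 = x ∧ g d = y ∧ ∀ i ≤ d, P i (g i) := by
  have hpointwise : ∀ i, ∃ z, (i = 0 → z = x) ∧ (i = d → z = y) ∧ (i ≤ d → P i z) := by
    intro i
    rcases eq_or_ne i 0 with rfl | hi
    · exact ⟨x, fun _ => rfl, fun h0 => absurd h0.symm hd, fun _ => hx⟩
    rcases lt_trichotomy i d with hlt | rfl | hgt
    · obtain ⟨z, hz⟩ := h i hlt
      exact ⟨z, fun h0 => absurd h0 hi, fun hid => absurd hid hlt.ne, fun _ => hz⟩
    · exact ⟨y, fun h0 => absurd h0 hi, fun _ => rfl, fun _ => hy⟩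
    · exact ⟨y, fun h0 => absurd h0 hi, fun _ => rfl, fun hle => absurd hle hgt.not_ge⟩
  choose g hg0 hgd hgP using hpointwise
  exact ⟨g, hg0 0 rfl, hgd d rfl, hgP⟩

theorem multiset_pair_eq_pair_iff {α : Type*} {a b c d : α} :
    ({a, b} : Multiset α) = {c, d} ↔ a = c ∧ b = d ∨ a = d ∧ b = c := by
  rw [← Sym2.eq_iff, ← (Sym2.equivMultiset α).injective.eq_iff, Subtype.ext_iff]
  rfl

theorem swap_mem_pair_swap {α : Type*} {a b : α} {s : α × α}
    (hs : s ∈ ({(a, b), (b, a)} : Set (α × α))) : s.swap ∈ ({(a, b), (b, a)} : Set (α × α)) := by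
  rcases hs with rfl | rfl
  · exact Or.inr rfl
  · exact Or.inl rfl

section Automaton

variable {L : Type} [DecidableEq L] {D E : Set (Multiset L)} {a b c d x y : L}

theorem mEdge.swap {p q : L × L} (h : mEdge D E p q) : mEdge D E q.swap p.swap := by
  simpa only [mEdge, mVert, Set.mem_ofPred_eq, Prod.fst_swap, Prod.snd_swap, Multiset.pair_comm,
    and_left_comm] using h

theorem hasWalk.swap {k : ℕ} {p q : L × L} (h : hasWalk (mEdge D E) k p q) :
    hasWalk (mEdge D E) k q.swap p.swap :=
  h.map_reverse fun _ _ => mEdge.swap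

theorem simPair_swap_left : simPair D E b a c d ↔ simPair D E a b c d := by
  rw [simPair, simPair, Set.pair_comm]

theorem simPair_swap_right : simPair D E a b d c ↔ simPair D E a b c d := by
  rw [simPair, simPair, Set.pair_comm (d, c)]

theorem simPair.symm (h : simPair D E a b c d) : simPair D E c d a b := by
  intro s hs t ht
  obtain ⟨k, hk⟩ := h t.swap (swap_mem_pair_swap ht) s.swap (swap_mem_pair_swap hs)
  exact ⟨k, hk.swap⟩

theorem simPair.trans (h₁ : simPair D E a b c d) (h₂ : simPair D E c d x y) :
    simPair D E a b x y := by
  intro s hs t ht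
  obtain ⟨m, hm⟩ := h₁ s hs (c, d) (Or.inl rfl)
  obtain ⟨n, hn⟩ := h₂ (c, d) (Or.inl rfl) t ht
  exact ⟨m + n, hm.trans hn⟩

theorem simMul_pair : simMul D E {a, b} {c, d} ↔ simPair D E a b c d := by
  refine ⟨?_, fun h => ⟨a, b, c, d, rfl, rfl, h⟩⟩
  rintro ⟨a', b', c', d', hab, hcd, h⟩
  rcases multiset_pair_eq_pair_iff.1 hab with ⟨rfl, rfl⟩ | ⟨rfl, rfl⟩ <;>
    rcases multiset_pair_eq_pair_iff.1 hcd with ⟨rfl, rfl⟩ | ⟨rfl, rfl⟩ <;>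
    simpa only [simPair_swap_left, simPair_swap_right] using h

theorem flexPair.swap (h : flexPair D E a b) : flexPair D E b a := by
  obtain ⟨K, hK⟩ := h
  refine ⟨K, fun k hk => ?_⟩
  obtain ⟨hab_ab, hab_ba, hba_ab, hba_ba⟩ := hK k hk
  exact ⟨hba_ba, hba_ab, hab_ba, hab_ab⟩

theorem flexMul_pair : flexMul D E {a, b} ↔ flexPair D E a b := by
  refine ⟨?_, fun h => ⟨a, b, rfl, h⟩⟩
  rintro ⟨a', b', hab, h⟩
  rcases multiset_pair_eq_pair_iff.1 hab with ⟨rfl, rfl⟩ | ⟨rfl, rfl⟩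
  · exact h
  · exact h.swap

theorem flexPair.eventually_hasWalk_self (h : flexPair D E a b) :
    ∀ᶠ k in atTop, hasWalk (mEdge D E) k (a, b) (a, b) := by
  obtain ⟨K, hK⟩ := h
  exact eventually_atTop.2 ⟨K, fun k hk => (hK k hk).1⟩

section FlexSCC

variable {Ds : Set (Multiset L)}

theorem flexPair_of_mem_flexSCC (hDs : Ds ∈ flexSCC D E) (hab : {a, b} ∈ Ds) :
    flexPair D E a b :=
  flexMul_pair.1 (hDs.2 _ hab)

theorem simPair_of_mem_flexSCC (hDs : Ds ∈ flexSCC D E) (hab : {a, b} ∈ Ds)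
    (hcd : {c, d} ∈ Ds) : simPair D E a b c d := by
  obtain ⟨⟨_, -, ⟨x, y, -, -, rfl, -, -⟩, rfl⟩, -⟩ := hDs
  exact (simMul_pair.1 hab.2.2).trans (simMul_pair.1 hcd.2.2).symm

theorem eventually_hasWalk_of_mem_flexSCC (hDs : Ds ∈ flexSCC D E) {p q : L × L}
    (hp : p ∈ mVert Ds) (hq : q ∈ mVert Ds) : ∀ᶠ k in atTop, hasWalk (mEdge D E) k p q := by
  obtain ⟨m, hpq⟩ := simPair_of_mem_flexSCC hDs hp hq p (Or.inl rfl) q (Or.inl rfl)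
  exact hpq.eventually_of_eventually_closed
    (flexPair_of_mem_flexSCC hDs hp).eventually_hasWalk_self

theorem eventually_forall_hasWalk_of_mem_flexSCC (hDs : Ds ∈ flexSCC D E)
    (hfin : (mVert Ds).Finite) :
    ∀ᶠ k in atTop, ∀ p ∈ mVert Ds, ∀ q ∈ mVert Ds, hasWalk (mEdge D E) k p q :=
  (eventually_all_finite hfin).2 fun _ hp =>
    (eventually_all_finite hfin).2 fun _ hq =>
      eventually_hasWalk_of_mem_flexSCC hDs hp hq

end FlexSCC

theorem mem_mVert_of_mem_cfgRestrict {S : Set (Multiset L)} {C : Multiset L}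
    (hC : C ∈ cfgRestrict S D) (hab : {a, b} ≤ C) : (a, b) ∈ mVert D :=
  hC.2 _ (Multiset.card_pair a b) hab

theorem exists_config_seq_of_hasWalk {S : Set (Multiset L)} {C C' : Multiset L} {p q : L × L}
    {k : ℕ} (hk : k ≠ 0) (hC : C ∈ S) (hC' : C' ∈ S) (hp : {p.1, p.2} ≤ C) (hq : {q.1, q.2} ≤ C')
    (h : hasWalk (mEdge (dOfS S) E) k p q) :
    ∃ (f : ℕ → L × L) (G : ℕ → Multiset L), f 0 = p ∧ G 0 = C ∧ f k = q ∧ G k = C' ∧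
      (∀ i ≤ k, {(f i).1, (f i).2} ≤ G i ∧ G i ∈ S) ∧
      ∀ i < k, {(f i).2, (f (i + 1)).1} ∈ E := by
  obtain ⟨f, rfl, rfl, hf⟩ := h.exists_seq
  have hconfig : ∀ i < k, ∃ M : Multiset L, {(f i).1, (f i).2} ≤ M ∧ M ∈ S := by
    intro i hi
    obtain ⟨-, M, hMS, hfM⟩ := (hf i hi).1
    exact ⟨M, hfM, hMS⟩
  obtain ⟨G, hG0, hGk, hG⟩ := exists_seq_of_endpoints
    (P := fun i M => {(f i).1, (f i).2} ≤ M ∧ M ∈ S) hk ⟨hp, hC⟩ ⟨hq, hC'⟩ hconfig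
  exact ⟨f, G, rfl, hG0, rfl, hGk, hG, fun i hi => (hf i hi).2.2⟩

end Automaton

theorem stmt6_general {L : Type} [DecidableEq L] {S E Ds : Set (Multiset L)}
    (hDs : Ds ∈ flexSCC (dOfS S) E) (hfin : (mVert Ds).Finite) :
    ∃ K : ℕ, ∀ d : ℕ, K ≤ d →
      ∀ C ∈ cfgRestrict S Ds, ∀ C' ∈ cfgRestrict S Ds,
      ∀ α β α' β' : L, ({α, β} : Multiset L) ≤ C → ({α', β'} : Multiset L) ≤ C' →
      ∃ A B : ℕ → L, ∃ Cs : ℕ → Multiset L,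
        A 1 = α ∧ B 1 = β ∧ Cs 1 = C ∧
        A (d + 1) = α' ∧ B (d + 1) = β' ∧ Cs (d + 1) = C' ∧
        (∀ i : ℕ, 1 ≤ i → i ≤ d + 1 →
          ({A i, B i} : Multiset L) ≤ Cs i ∧ Cs i ∈ S) ∧
        (∀ i : ℕ, 1 ≤ i → i ≤ d → ({B i, A (i + 1)} : Multiset L) ∈ E) := by
  obtain ⟨K, hK⟩ := eventually_atTop.1
    ((eventually_forall_hasWalk_of_mem_flexSCC hDs hfin).and (eventually_ne_atTop 0))
  refine ⟨K, fun d hd C hC C' hC' α β α' β' hαβ hαβ' => ?_⟩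
  obtain ⟨hwalk, hd0⟩ := hK d hd
  obtain ⟨f, G, hf0, hG0, hfd, hGd, hconfig, hedge⟩ :=
    exists_config_seq_of_hasWalk hd0 hC.1 hC'.1 hαβ hαβ' <|
      hwalk (α, β) (mem_mVert_of_mem_cfgRestrict hC hαβ)
        (α', β') (mem_mVert_of_mem_cfgRestrict hC' hαβ')
  refine ⟨fun i => (f (i - 1)).1, fun i => (f (i - 1)).2, fun i => G (i - 1),
    congrArg Prod.fst hf0, congrArg Prod.snd hf0, hG0,
    congrArg Prod.fst hfd, congrArg Prod.snd hfd, hGd,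
    fun i _ hid => hconfig (i - 1) (Nat.sub_le_of_le_add hid), fun i hi hid => ?_⟩
  obtain ⟨j, rfl⟩ := Nat.exists_eq_add_of_le' hi
  exact hedge j hid

/-- Property of path-flexible strongly connected components,
unrooted trees. -/
theorem stmt6 {L : Type} [Fintype L] [DecidableEq L]
    (Δ : ℕ) (hΔ : 1 ≤ Δ) (V E : Set (Multiset L))
    (hV : ∀ C ∈ V, Multiset.card C = Δ)
    (hE : ∀ D' ∈ E, Multiset.card D' = 2)
    (S : Set (Multiset L)) (hS : S ⊆ V)
    (Ds : Set (Multiset L)) (hDs : Ds ∈ flexSCC (dOfS S) E) :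
    ∃ K : ℕ, ∀ d : ℕ, K ≤ d →
      ∀ C ∈ cfgRestrict S Ds, ∀ C' ∈ cfgRestrict S Ds,
      ∀ α β α' β' : L, ({α, β} : Multiset L) ≤ C → ({α', β'} : Multiset L) ≤ C' →
      ∃ A B : ℕ → L, ∃ Cs : ℕ → Multiset L,
        A 1 = α ∧ B 1 = β ∧ Cs 1 = C ∧
        A (d + 1) = α' ∧ B (d + 1) = β' ∧ Cs (d + 1) = C' ∧
        (∀ i : ℕ, 1 ≤ i → i ≤ d + 1 →
          ({A i, B i} : Multiset L) ≤ Cs i ∧ Cs i ∈ S) ∧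
        (∀ i : ℕ, 1 ≤ i → i ≤ d → ({B i, A (i + 1)} : Multiset L) ∈ E) :=
  stmt6_general hDs (Set.toFinite _)
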